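/- Let m, q be positive integers and ε > 0 a real number with εm an integer and ε < 1/q. For each k ∈ {4q-1, 4q, 4q+1, 4q+2}, there exists a series-parallel graph G of girth at least k that is not ((2+ε)m, m)-choosable; i.e., there is a list assignment L with |L(v)| = (2+ε)m for all vertices v admitting no m-fold L-colouring. In particular, G can be taken to be the parallel composition of p = C((2+ε)m, m)² paths each of length ⌈k/2⌉ joining two terminals x and y. -/

import Mathlib

open SimpleGraph

/-- A two-terminal graph: a simple graph together with two terminal vertices. -/
structure TTGraph where
  V : Type
  G : SimpleGraph V
  x : V
  y : V

/-- Vertex type of the parallel composition. -/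
def TTGraph.pV (A B : TTGraph) : Type := A.V ⊕ {v : B.V // v ≠ B.x ∧ v ≠ B.y}

open Classical in
/-- The canonical map from the second graph into the parallel composition. -/
noncomputable def TTGraph.pmap (A B : TTGraph) (v : B.V) : A.pV B :=
  if h1 : v = B.x then Sum.inl A.x
  else if h2 : v = B.y then Sum.inl A.y
  else Sum.inr ⟨v, h1, h2⟩

/-- Parallel composition of two-terminal graphs: identify the two `x`'s and the two `y`'s. -/
noncomputable def TTGraph.parallel (A B : TTGraph) : TTGraph where
  V := A.pV B
  G := SimpleGraph.fromRel (fun u w =>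
    (∃ a b, A.G.Adj a b ∧ u = Sum.inl a ∧ w = Sum.inl b) ∨
    (∃ a b, B.G.Adj a b ∧ u = A.pmap B a ∧ w = A.pmap B b))
  x := Sum.inl A.x
  y := Sum.inl A.y

/-- Vertex type of the series composition. -/
def TTGraph.sV (A B : TTGraph) : Type := A.V ⊕ {v : B.V // v ≠ B.x}

open Classical in
/-- The canonical map from the second graph into the series composition. -/
noncomputable def TTGraph.smap (A B : TTGraph) (v : B.V) : A.sV B :=
  if h1 : v = B.x then Sum.inl A.y else Sum.inr ⟨v, h1⟩

/-- Series composition of two-terminal graphs: identify `y` of the first with `x` of the second. -/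
noncomputable def TTGraph.series (A B : TTGraph) : TTGraph where
  V := A.sV B
  G := SimpleGraph.fromRel (fun u w =>
    (∃ a b, A.G.Adj a b ∧ u = Sum.inl a ∧ w = Sum.inl b) ∨
    (∃ a b, B.G.Adj a b ∧ u = A.smap B a ∧ w = A.smap B b))
  x := Sum.inl A.x
  y := A.smap B B.y

/-- Isomorphism of two-terminal graphs (preserving terminals). -/
def TTGraph.Equiv (A B : TTGraph) : Prop :=
  ∃ e : A.G ≃g B.G, e A.x = B.x ∧ e A.y = B.y

/-- `K₂` with its two vertices as terminals. -/
def K2TT : TTGraph := ⟨Bool, ⊤, false, true⟩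

/-- Two-terminal series-parallel graphs, built recursively from `K₂` by
series and parallel compositions (up to terminal-preserving isomorphism). -/
inductive IsSP : TTGraph → Prop
  | k2 (A : TTGraph) : A.Equiv K2TT → IsSP A
  | parallel (A B C : TTGraph) : IsSP A → IsSP B → C.Equiv (A.parallel B) → IsSP C
  | series (A B C : TTGraph) : IsSP A → IsSP B → C.Equiv (A.series B) → IsSP C

/-- A graph is series-parallel if it is a two-terminal series-parallel graph
for some choice of terminals. -/
def SeriesParallel {V : Type} (G : SimpleGraph V) : Prop :=
  ∃ x y : V, IsSP ⟨V, G, x, y⟩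

/-- `G` is `(a, m)`-choosable: every list assignment with lists of size `a`
admits an `m`-fold colouring from the lists with adjacent vertices getting
disjoint colour sets. -/
def Choosable {V : Type} (G : SimpleGraph V) (a m : ℕ) : Prop :=
  ∀ L : V → Finset ℕ, (∀ v, (L v).card = a) →
    ∃ φ : V → Finset ℕ, (∀ v, φ v ⊆ L v) ∧ (∀ v, (φ v).card = m) ∧
      ∀ u w, G.Adj u w → Disjoint (φ u) (φ w)

/-- `G` is a path graph: it has a Hamiltonian path using all of its edges. -/
def IsPathGraph {V : Type} (G : SimpleGraph V) : Prop :=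
  ∃ (u w : V) (p : G.Walk u w), p.IsPath ∧ (∀ v, v ∈ p.support) ∧
    ∀ e ∈ G.edgeSet, e ∈ p.edges

/-- `G` is a cycle graph: it has a Hamiltonian cycle using all of its edges. -/
def IsCycleGraph {V : Type} (G : SimpleGraph V) : Prop :=
  ∃ (u : V) (p : G.Walk u u), p.IsCycle ∧ (∀ v, v ∈ p.support) ∧
    ∀ e ∈ G.edgeSet, e ∈ p.edges

/-!
Fix disjoint colour sets `X` and `C` of sizes `2m + e` and `m + e`, where `e = εm`. For `m`-subsets
`S`, `T` of `X`, give a path with `2q + 1` edges the lists `X, S ∪ C, …, S ∪ C, C ∪ T, X`. If its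
first vertex is coloured `S`, the colours alternate between lying in `C` and lying in `S`: the
second vertex is coloured inside `C`, and since `C` has only `e` colours to spare, each return from
`C` leaks at most `e` more colours out of the expected set. After `2q` steps at most `qe < m` of
the colours lie outside `T`, so the last vertex cannot be coloured `T`. Joining in parallel one
such path for each pair `(S, T)` rules out every colouring of the terminals, and a cycle in the
resulting graph runs through both terminals.
-/

section Cycles

variable {V : Type*} {G : SimpleGraph V} {h : V → ℕ}

lemma le_add_length_of_adj_le_succ (hh : ∀ ⦃u v⦄, G.Adj u v → h v ≤ h u + 1) {u v : V}
    (p : G.Walk u v) : h v ≤ h u + p.length := by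
  induction p with
  | nil => simp
  | cons hadj p ih =>
    have := hh hadj
    rw [Walk.length_cons]
    omega

lemma two_mul_le_two_mul_add_length (hh : ∀ ⦃u v⦄, G.Adj u v → h v ≤ h u + 1) {a u v : V}
    {c : G.Walk a a} (hu : u ∈ c.support) (hv : v ∈ c.support) :
    2 * h v ≤ 2 * h u + c.length := by
  classical
  have hv' : v ∈ (c.rotate u hu).support := (Walk.mem_support_rotate_iff c u hu).2 hv
  set there := (c.rotate u hu).takeUntil v hv'
  set back := (c.rotate u hu).dropUntil v hv'
  have hlen : there.length + back.length = c.length := by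
    rw [← Walk.length_append, Walk.take_spec, Walk.length_rotate]
  have hthere := le_add_length_of_adj_le_succ hh there
  have hback := le_add_length_of_adj_le_succ hh back.reverse
  rw [Walk.length_reverse] at hback
  omega

lemma exists_ne_adj_adj_of_isCycle {a v : V} {c : G.Walk a a} (hc : c.IsCycle)
    (hv : v ∈ c.support) :
    ∃ s ∈ c.support, ∃ t ∈ c.support, s ≠ t ∧ G.Adj v s ∧ G.Adj v t := by
  classical
  have hr := hc.rotate hv
  have hsupp (i : ℕ) : (c.rotate v hv).getVert i ∈ c.support :=
    (Walk.mem_support_rotate_iff c v hv).1 (Walk.getVert_mem_support _ _)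
  exact ⟨_, hsupp _, _, hsupp _, hr.snd_ne_penultimate, Walk.adj_snd hr.not_nil,
    (Walk.adj_penultimate hr.not_nil).symm⟩

lemma exists_lt_and_exists_gt_of_isCycle
    (hh : ∀ ⦃u v⦄, G.Adj u v → h u = h v + 1 ∨ h v = h u + 1) {a v : V} {c : G.Walk a a}
    (hc : c.IsCycle) (hv : v ∈ c.support) (hinj : Set.InjOn h (G.neighborSet v)) :
    (∃ s ∈ c.support, h s < h v) ∧ ∃ t ∈ c.support, h v < h t := by
  obtain ⟨s, hs, t, ht, hst, hvs, hvt⟩ := exists_ne_adj_adj_of_isCycle hc hv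
  have hne : h s ≠ h t := hinj.ne hvs hvt hst
  rcases hh hvs with h₁ | h₁ <;> rcases hh hvt with h₂ | h₂
  · omega
  · exact ⟨⟨s, hs, by omega⟩, t, ht, by omega⟩
  · exact ⟨⟨t, ht, by omega⟩, s, hs, by omega⟩
  · omega

end Cycles

section FoldColoring

variable {V W α : Type*}

/-- `φ` is an `m`-fold `L`-colouring of `G`, as in the definition of `Choosable`. -/
structure IsFoldColoring (G : SimpleGraph V) (L : V → Finset α) (m : ℕ) (φ : V → Finset α) :
    Prop where
  subset : ∀ v, φ v ⊆ L v
  card_eq : ∀ v, (φ v).card = m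
  disjoint : ∀ u w, G.Adj u w → Disjoint (φ u) (φ w)

lemma IsFoldColoring.comp_hom {G : SimpleGraph V} {H : SimpleGraph W} {L : V → Finset α} {m : ℕ}
    {φ : V → Finset α} (hφ : IsFoldColoring G L m φ) (f : H →g G) :
    IsFoldColoring H (L ∘ f) m (φ ∘ f) where
  subset v := hφ.subset (f v)
  card_eq v := hφ.card_eq (f v)
  disjoint _ _ huw := hφ.disjoint _ _ (f.map_adj huw)

end FoldColoring

section Alternation

variable {α : Type*} [DecidableEq α]

lemma card_sdiff_add_card_le {U W P Q : Finset α} (hUW : Disjoint U W) (hW : W ⊆ P ∪ Q) :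
    (W \ Q).card + U.card ≤ (U \ P).card + P.card := by
  have hdisj : Disjoint (W \ Q) U := hUW.symm.mono_left Finset.sdiff_subset
  calc (W \ Q).card + U.card = (W \ Q ∪ U).card := (Finset.card_union_of_disjoint hdisj).symm
    _ ≤ (U \ P ∪ P).card := by
      refine Finset.card_le_card (Finset.union_subset ?_ ?_)
      · exact (sdiff_le_iff'.2 hW).trans Finset.subset_union_right
      · exact le_sdiff_sup
    _ ≤ (U \ P).card + P.card := Finset.card_union_le _ _

variable {ψ : ℕ → Finset α} {C S T : Finset α} {m e : ℕ}

lemma card_sdiff_le_of_alternating {n : ℕ} (hS : S.card = m) (hC : C.card = m + e)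
    (hcard : ∀ j < n, (ψ j).card = m) (hdisj : ∀ j < n, Disjoint (ψ j) (ψ (j + 1)))
    (hfirst : ψ 0 = S) (hsub : ∀ j < n, ψ (j + 1) ⊆ S ∪ C) (i : ℕ) (hi : 2 * i < n) :
    (ψ (2 * i + 1) \ C).card ≤ i * e := by
  have toC (j : ℕ) (hj : j < n) : (ψ (j + 1) \ C).card ≤ (ψ j \ S).card := by
    have := card_sdiff_add_card_le (hdisj j hj) (hsub j hj)
    have := hcard j hj
    omega
  have toS (j : ℕ) (hj : j < n) : (ψ (j + 1) \ S).card ≤ (ψ j \ C).card + e := by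
    have := card_sdiff_add_card_le (hdisj j hj) (Finset.union_comm S C ▸ hsub j hj)
    have := hcard j hj
    omega
  induction i with
  | zero => simpa [hfirst] using toC 0 hi
  | succ i ih =>
    calc (ψ (2 * (i + 1) + 1) \ C).card ≤ (ψ (2 * i + 1 + 1) \ S).card := toC _ hi
      _ ≤ (ψ (2 * i + 1) \ C).card + e := toS _ (by omega)
      _ ≤ i * e + e := Nat.add_le_add_right (ih (by omega)) e
      _ = (i + 1) * e := (Nat.succ_mul i e).symm

/-- The list at distance `j` from `x` on a path with `2q + 1` edges. -/
def strandList (q : ℕ) (X C S T : Finset α) (j : ℕ) : Finset α :=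
  if j = 0 ∨ j = 2 * q + 1 then X else if j = 2 * q then C ∪ T else S ∪ C

lemma last_ne_of_subset_strandList {q : ℕ} (hq : 0 < q) (hqe : q * e < m) (hS : S.card = m)
    (hC : C.card = m + e) {X : Finset α} (hcard : ∀ j ≤ 2 * q, (ψ j).card = m)
    (hdisj : ∀ j ≤ 2 * q, Disjoint (ψ j) (ψ (j + 1)))
    (hsub : ∀ j ≤ 2 * q, ψ j ⊆ strandList q X C S T j) (hfirst : ψ 0 = S) :
    ψ (2 * q + 1) ≠ T := by
  intro hlast
  obtain ⟨r, rfl⟩ : ∃ r, q = r + 1 := Nat.exists_eq_add_one.2 hq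
  have hodd : (ψ (2 * r + 1) \ C).card ≤ r * e := by
    refine card_sdiff_le_of_alternating hS hC (n := 2 * r + 1) (fun j hj => hcard j (by omega))
      (fun j hj => hdisj j (by omega)) hfirst (fun j hj => ?_) r (by omega)
    have := hsub (j + 1) (by omega)
    rwa [strandList, if_neg (by omega), if_neg (by omega)] at this
  have hpenultimate : ψ (2 * r + 2) ⊆ C ∪ T := by
    have := hsub (2 * r + 2) (by omega)
    rwa [strandList, if_neg (by omega), if_pos (by omega)] at this
  have hle := card_sdiff_add_card_le (hdisj (2 * r + 1) (by omega)) hpenultimate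
  rw [Finset.sdiff_eq_self_of_disjoint (hlast ▸ hdisj (2 * r + 2) (by omega)),
    hcard _ (by omega), hcard _ (by omega)] at hle
  rw [Nat.succ_mul] at hqe
  omega

end Alternation

lemma fromRel_exists_or_exists_eq_map_sup_map {V₁ V₂ W : Type*} (G : SimpleGraph V₁)
    (H : SimpleGraph V₂) (f : V₁ → W) (g : V₂ → W) :
    fromRel (fun u w => (∃ a b, G.Adj a b ∧ u = f a ∧ w = f b) ∨
      ∃ a b, H.Adj a b ∧ u = g a ∧ w = g b) = G.map f ⊔ H.map g := by
  ext u w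
  rw [fromRel_adj, sup_adj, map_adj', map_adj', ← and_or_left]
  refine and_congr_right fun _ => ⟨?_, fun h => Or.inl ?_⟩
  · rintro ((⟨a, b, h, rfl, rfl⟩ | ⟨a, b, h, rfl, rfl⟩) |
      (⟨a, b, h, rfl, rfl⟩ | ⟨a, b, h, rfl, rfl⟩))
    · exact Or.inl ⟨a, b, h, rfl, rfl⟩
    · exact Or.inr ⟨a, b, h, rfl, rfl⟩
    · exact Or.inl ⟨b, a, h.symm, rfl, rfl⟩
    · exact Or.inr ⟨b, a, h.symm, rfl, rfl⟩
  · simpa only [eq_comm] using h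

namespace TTGraph

section Parallel

variable {A B : TTGraph}

lemma pmap_x : A.pmap B B.x = Sum.inl A.x := dif_pos rfl

lemma pmap_y (hB : B.x ≠ B.y) : A.pmap B B.y = Sum.inl A.y :=
  (dif_neg hB.symm).trans (dif_pos rfl)

lemma pmap_cases (A : TTGraph) (b : B.V) :
    (b = B.x ∧ A.pmap B b = Sum.inl A.x) ∨ (b = B.y ∧ A.pmap B b = Sum.inl A.y) ∨
      ∃ hb : b ≠ B.x ∧ b ≠ B.y, A.pmap B b = Sum.inr ⟨b, hb⟩ := by
  by_cases hx : b = B.x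
  · exact Or.inl ⟨hx, dif_pos hx⟩
  by_cases hy : b = B.y
  · exact Or.inr (Or.inl ⟨hy, (dif_neg hx).trans (dif_pos hy)⟩)
  · exact Or.inr (Or.inr ⟨⟨hx, hy⟩, (dif_neg hx).trans (dif_neg hy)⟩)

lemma eq_or_eq_of_pmap_eq_inl {a : A.V} {b : B.V} (h : A.pmap B b = Sum.inl a) :
    a = A.x ∨ a = A.y := by
  rcases pmap_cases A b with ⟨-, hb⟩ | ⟨-, hb⟩ | ⟨_, hb⟩
  · exact Or.inl (Sum.inl.inj (h.symm.trans hb))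
  · exact Or.inr (Sum.inl.inj (h.symm.trans hb))
  · cases h.symm.trans hb

lemma eq_coe_of_pmap_eq_inr {b : B.V} {c : {v : B.V // v ≠ B.x ∧ v ≠ B.y}}
    (h : A.pmap B b = Sum.inr c) : b = c := by
  rcases pmap_cases A b with ⟨-, hb⟩ | ⟨-, hb⟩ | ⟨_, hb⟩
  · cases h.symm.trans hb
  · cases h.symm.trans hb
  · exact congrArg Subtype.val (Sum.inr.inj (hb.symm.trans h))

lemma pmap_injective (hA : A.x ≠ A.y) : Function.Injective (A.pmap B) := by
  intro b c h
  rcases pmap_cases A c with ⟨hc, hc'⟩ | ⟨hc, hc'⟩ | ⟨_, hc'⟩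
  · rcases pmap_cases A b with ⟨hb, -⟩ | ⟨-, hb'⟩ | ⟨_, hb'⟩
    · exact hb.trans hc.symm
    · exact (hA (Sum.inl.inj ((hc'.symm.trans h.symm).trans hb'))).elim
    · cases (hc'.symm.trans h.symm).trans hb'
  · rcases pmap_cases A b with ⟨-, hb'⟩ | ⟨hb, -⟩ | ⟨_, hb'⟩
    · exact (hA (Sum.inl.inj ((hb'.symm.trans h).trans hc'))).elim
    · exact hb.trans hc.symm
    · cases (hc'.symm.trans h.symm).trans hb'
  · exact eq_coe_of_pmap_eq_inr (h.trans hc')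

lemma parallel_eq_map_sup_map : (A.parallel B).G = A.G.map Sum.inl ⊔ B.G.map (A.pmap B) :=
  fromRel_exists_or_exists_eq_map_sup_map A.G B.G Sum.inl (A.pmap B)

lemma parallel_adj {u w : A.pV B} : (A.parallel B).G.Adj u w ↔
    (A.G.map Sum.inl).Adj u w ∨ (B.G.map (A.pmap B)).Adj u w := by
  rw [parallel_eq_map_sup_map]
  rfl

lemma exists_eq_inl_of_parallel_adj_inl {a : A.V} (hx : a ≠ A.x) (hy : a ≠ A.y) {w : A.pV B}
    (h : (A.parallel B).G.Adj (Sum.inl a) w) : ∃ b, A.G.Adj a b ∧ w = Sum.inl b := by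
  obtain ⟨-, a', b, hab, ha, rfl⟩ | ⟨-, c, -, -, hc, -⟩ := parallel_adj.1 h
  · cases Sum.inl.inj ha
    exact ⟨b, hab, rfl⟩
  · exact ((eq_or_eq_of_pmap_eq_inl hc).elim hx hy).elim

lemma exists_eq_pmap_of_parallel_adj_inr {b : {v : B.V // v ≠ B.x ∧ v ≠ B.y}} {w : A.pV B}
    (h : (A.parallel B).G.Adj (Sum.inr b) w) : ∃ c, B.G.Adj b c ∧ w = A.pmap B c := by
  obtain ⟨-, _, _, _, ha, _⟩ | ⟨-, b', c, hbc, hb, rfl⟩ := parallel_adj.1 h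
  · cases ha
  · exact ⟨c, eq_coe_of_pmap_eq_inr hb ▸ hbc, rfl⟩

/-- The inclusion of the first graph into a parallel composition. -/
def parallelInl (A B : TTGraph) : A.G →g (A.parallel B).G where
  toFun := Sum.inl
  map_rel' h := parallel_adj.2 (Or.inl (map_adj_apply' h (Sum.inl_injective.ne h.ne)))

/-- The canonical map of the second graph into a parallel composition. It preserves adjacency
because the terminals of the first graph are distinct. -/
noncomputable def parallelInr (hA : A.x ≠ A.y) (B : TTGraph) : B.G →g (A.parallel B).G where
  toFun := A.pmap B
  map_rel' h := parallel_adj.2 (Or.inr (map_adj_apply' h ((pmap_injective hA).ne h.ne)))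

/-- The function on a parallel composition glued from functions on the two graphs. -/
def parallelGlue {β : Type*} (f : A.V → β) (g : B.V → β) : (A.parallel B).V → β :=
  Sum.elim f fun b => g b.1

lemma parallelGlue_pmap {β : Type*} {f : A.V → β} {g : B.V → β} (hx : f A.x = g B.x)
    (hy : f A.y = g B.y) (b : B.V) : parallelGlue f g (A.pmap B b) = g b := by
  rcases pmap_cases A b with ⟨rfl, hb⟩ | ⟨rfl, hb⟩ | ⟨_, hb⟩ <;> rw [hb]
  · exact hx
  · exact hy
  · rfl

end Parallel

section Height

/-- `h` measures the distance from `x` in a graph consisting of strands of length `l` that join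
`x` to `y`: it starts at `0`, ends at `l`, changes by one along each edge, and has at most one edge
upwards and one downwards at each inner vertex. -/
structure IsHeight (A : TTGraph) (l : ℕ) (h : A.V → ℕ) : Prop where
  apply_x : h A.x = 0
  apply_y : h A.y = l
  adj : ∀ ⦃u v⦄, A.G.Adj u v → h u = h v + 1 ∨ h v = h u + 1
  injOn_neighborSet : ∀ ⦃v⦄, v ≠ A.x → v ≠ A.y → Set.InjOn h (A.G.neighborSet v)

variable {A B : TTGraph} {l : ℕ} {f : A.V → ℕ} {g : B.V → ℕ}

lemma IsHeight.x_ne_y (hf : A.IsHeight l f) (hl : l ≠ 0) : A.x ≠ A.y := fun hxy =>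
  hl (by rw [← hf.apply_y, ← hxy, hf.apply_x])

lemma IsHeight.parallel (hf : A.IsHeight l f) (hg : B.IsHeight l g) :
    (A.parallel B).IsHeight l (parallelGlue f g) := by
  have glue_pmap := parallelGlue_pmap (hf.apply_x.trans hg.apply_x.symm)
    (hf.apply_y.trans hg.apply_y.symm)
  refine ⟨hf.apply_x, hf.apply_y, fun u v huv => ?_, ?_⟩
  · obtain ⟨-, a, b, hab, rfl, rfl⟩ | ⟨-, a, b, hab, rfl, rfl⟩ := parallel_adj.1 huv
    · exact hf.adj hab
    · simpa only [glue_pmap] using hg.adj hab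
  · rintro (a | b) hx hy s hs t ht hst
    · have hax : a ≠ A.x := fun h => hx (congrArg Sum.inl h)
      have hay : a ≠ A.y := fun h => hy (congrArg Sum.inl h)
      obtain ⟨s, hs', rfl⟩ := exists_eq_inl_of_parallel_adj_inl hax hay hs
      obtain ⟨t, ht', rfl⟩ := exists_eq_inl_of_parallel_adj_inl hax hay ht
      exact congrArg Sum.inl (hf.injOn_neighborSet hax hay hs' ht' hst)
    · obtain ⟨s, hs', rfl⟩ := exists_eq_pmap_of_parallel_adj_inr hs
      obtain ⟨t, ht', rfl⟩ := exists_eq_pmap_of_parallel_adj_inr ht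
      rw [glue_pmap, glue_pmap] at hst
      exact congrArg _ (hg.injOn_neighborSet b.2.1 b.2.2 hs' ht' hst)

-- The lowest and the highest vertex of a cycle cannot be inner, so they are the two terminals.
lemma IsHeight.two_mul_le_egirth (hf : A.IsHeight l f) : ((2 * l : ℕ) : ℕ∞) ≤ A.G.egirth := by
  classical
  refine le_egirth.2 fun a c hc => Nat.cast_le.2 ?_
  have hne : c.support.toFinset.Nonempty := ⟨a, by simp⟩
  obtain ⟨u, hu, hmin⟩ := Finset.exists_min_image _ f hne
  obtain ⟨v, hv, hmax⟩ := Finset.exists_max_image _ f hne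
  simp only [List.mem_toFinset] at hu hv hmin hmax
  have hu_terminal : u = A.x ∨ u = A.y := by
    by_contra! hinner
    obtain ⟨⟨s, hs, hlt⟩, -⟩ := exists_lt_and_exists_gt_of_isCycle hf.adj hc hu
      (hf.injOn_neighborSet hinner.1 hinner.2)
    exact hlt.not_ge (hmin s hs)
  have hv_terminal : v = A.x ∨ v = A.y := by
    by_contra! hinner
    obtain ⟨-, t, ht, hlt⟩ := exists_lt_and_exists_gt_of_isCycle hf.adj hc hv
      (hf.injOn_neighborSet hinner.1 hinner.2)
    exact hlt.not_ge (hmax t ht)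
  have hlt : f u < f v := by
    obtain ⟨s, hs, -, -, -, hus, -⟩ := exists_ne_adj_adj_of_isCycle hc hu
    have := hf.adj hus
    have := hmin s hs
    have := hmax s hs
    omega
  have hlength : 2 * f v ≤ 2 * f u + c.length :=
    two_mul_le_two_mul_add_length (fun _ _ huv => by have := hf.adj huv; omega) hu hv
  have hx := hf.apply_x
  have hy := hf.apply_y
  rcases hu_terminal with rfl | rfl <;> rcases hv_terminal with rfl | rfl <;> omega

end Height

section Path

/-- The path with `n` edges, with its ends as terminals. -/
def path (n : ℕ) : TTGraph := ⟨Fin (n + 1), pathGraph (n + 1), 0, Fin.last n⟩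

lemma path_isHeight (n : ℕ) : (path n).IsHeight n Fin.val where
  apply_x := rfl
  apply_y := rfl
  adj _ _ huv := (pathGraph_adj.1 huv).symm.imp Eq.symm Eq.symm
  injOn_neighborSet _ _ _ := Fin.val_injective.injOn

protected lemma Equiv.refl (A : TTGraph) : A.Equiv A := ⟨Iso.refl, rfl, rfl⟩

lemma path_one_equiv : (path 1).Equiv K2TT := by
  refine ⟨⟨finTwoEquiv, fun {u v : Fin 2} => ?_⟩, rfl, rfl⟩
  change finTwoEquiv u ≠ finTwoEquiv v ↔ (pathGraph 2).Adj u v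
  rw [pathGraph_two_eq_top, top_adj, finTwoEquiv.injective.ne_iff]

lemma series_eq_map_sup_map (A B : TTGraph) :
    (A.series B).G = A.G.map Sum.inl ⊔ B.G.map (A.smap B) :=
  fromRel_exists_or_exists_eq_map_sup_map A.G B.G Sum.inl (A.smap B)

instance : Unique {v : K2TT.V // v ≠ K2TT.x} where
  default := ⟨true, Bool.noConfusion⟩
  uniq := by
    rintro ⟨_ | _, h⟩
    · exact (h rfl).elim
    · rfl

lemma smap_false (A : TTGraph) : A.smap K2TT false = Sum.inl A.y := dif_pos rfl

lemma smap_true (A : TTGraph) : A.smap K2TT true = Sum.inr default := dif_neg Bool.noConfusion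

lemma map_smap_K2TT_adj {A : TTGraph} {u w : A.sV K2TT} :
    (K2TT.G.map (A.smap K2TT)).Adj u w ↔
      (u = Sum.inl A.y ∧ w = Sum.inr default) ∨ (u = Sum.inr default ∧ w = Sum.inl A.y) := by
  rw [← smap_false, ← smap_true]
  constructor
  · rintro ⟨hne, _ | _, _ | _, -, rfl, rfl⟩
    · exact (hne rfl).elim
    · exact Or.inl ⟨rfl, rfl⟩
    · exact Or.inr ⟨rfl, rfl⟩
    · exact (hne rfl).elim
  · have hne : A.smap K2TT false ≠ A.smap K2TT true := by
      rw [smap_false, smap_true]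
      exact Sum.inl_ne_inr
    rintro (⟨rfl, rfl⟩ | ⟨rfl, rfl⟩)
    · exact ⟨hne, false, true, Bool.noConfusion, rfl, rfl⟩
    · exact ⟨hne.symm, true, false, Bool.noConfusion, rfl, rfl⟩

lemma series_K2TT_adj {A : TTGraph} {u w : A.sV K2TT} : (A.series K2TT).G.Adj u w ↔
    (A.G.map Sum.inl).Adj u w ∨
      (u = Sum.inl A.y ∧ w = Sum.inr default) ∨ (u = Sum.inr default ∧ w = Sum.inl A.y) := by
  rw [series_eq_map_sup_map]
  exact or_congr_right map_smap_K2TT_adj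

lemma series_K2TT_adj_inl_inl {A : TTGraph} {a b : A.V} :
    (A.series K2TT).G.Adj (Sum.inl a) (Sum.inl b) ↔ A.G.Adj a b := by
  refine series_K2TT_adj.trans ⟨?_, fun h => Or.inl ?_⟩
  · rintro (h | ⟨-, h⟩ | ⟨h, -⟩)
    · exact map_adj_apply (f := Function.Embedding.inl).1 h
    · cases h
    · cases h
  · exact map_adj_apply (f := Function.Embedding.inl).2 h

lemma series_K2TT_adj_inl_inr {A : TTGraph} {a : A.V} {c : {v : K2TT.V // v ≠ K2TT.x}} :
    (A.series K2TT).G.Adj (Sum.inl a) (Sum.inr c) ↔ a = A.y := by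
  rw [Unique.eq_default c]
  refine series_K2TT_adj.trans ⟨?_, fun h => Or.inr (Or.inl ⟨congrArg Sum.inl h, rfl⟩)⟩
  rintro (⟨-, _, _, -, -, h⟩ | ⟨h, -⟩ | ⟨h, -⟩)
  · cases h
  · exact Sum.inl.inj h
  · cases h

/-- Attaching an edge at the end of a path adds one vertex at the end. -/
def pathSeriesEquiv (n : ℕ) : (path n).sV K2TT ≃ Fin (n + 2) where
  toFun := Sum.elim Fin.castSucc fun _ => Fin.last (n + 1)
  invFun := Fin.lastCases (Sum.inr default) Sum.inl
  left_inv := by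
    rintro (u | c)
    · exact Fin.lastCases_castSucc u
    · exact Fin.lastCases_last.trans (congrArg Sum.inr (Unique.default_eq c))
  right_inv u := by
    induction u using Fin.lastCases with
    | last => exact congrArg _ Fin.lastCases_last
    | cast u => exact congrArg _ (Fin.lastCases_castSucc u)

/-- Attaching an edge at the end of a path gives the path with one more edge. -/
def pathSeriesIso (n : ℕ) : ((path n).series K2TT).G ≃g (path (n + 1)).G where
  toEquiv := pathSeriesEquiv n
  map_rel_iff' := by
    have inl_inl (u w : Fin (n + 1)) : (pathGraph (n + 2)).Adj u.castSucc w.castSucc ↔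
        ((path n).series K2TT).G.Adj (Sum.inl u) (Sum.inl w) := by
      refine Iff.trans ?_ (series_K2TT_adj_inl_inl (A := path n)).symm
      change _ ↔ (pathGraph (n + 1)).Adj u w
      simp only [pathGraph_adj, Fin.val_castSucc]
    have inl_inr (u : Fin (n + 1)) (c : {v : K2TT.V // v ≠ K2TT.x}) :
        (pathGraph (n + 2)).Adj u.castSucc (Fin.last (n + 1)) ↔
          ((path n).series K2TT).G.Adj (Sum.inl u) (Sum.inr c) := by
      refine pathGraph_adj.trans (Iff.trans ?_ series_K2TT_adj_inl_inr.symm)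
      refine Iff.trans ?_ (Fin.ext_iff (b := Fin.last n)).symm
      simp only [Fin.val_castSucc, Fin.val_last]
      omega
    rintro (u | c) (w | d)
    · exact inl_inl u w
    · exact inl_inr u d
    · exact (adj_comm ..).trans ((inl_inr w c).trans (adj_comm ..))
    · rw [Subsingleton.elim c d]
      exact iff_of_false (SimpleGraph.irrefl _) (SimpleGraph.irrefl _)

lemma path_succ_equiv (n : ℕ) : (path (n + 1)).Equiv ((path n).series K2TT) := by
  have hx : (pathSeriesEquiv n).symm 0 = Sum.inl (path n).x :=
    (pathSeriesEquiv n).symm_apply_eq.2 rfl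
  have hy : (pathSeriesEquiv n).symm (Fin.last (n + 1)) = (path n).smap K2TT true := by
    rw [smap_true]
    exact (pathSeriesEquiv n).symm_apply_eq.2 rfl
  exact ⟨(pathSeriesIso n).symm, hx, hy⟩

lemma path_isSP {n : ℕ} (hn : n ≠ 0) : IsSP (path n) := by
  induction n, Nat.one_le_iff_ne_zero.2 hn using Nat.le_induction with
  | base => exact .k2 _ path_one_equiv
  | succ n hn' ih =>
    exact .series _ _ _ (ih (Nat.one_le_iff_ne_zero.1 hn')) (.k2 _ (Equiv.refl _))
      (path_succ_equiv n)

end Path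

section Theta

/-- Generalised theta graphs: parallel compositions of one or more paths with `l` edges. -/
inductive IsTheta (l : ℕ) : TTGraph → Prop
  | path : IsTheta l (path l)
  | parallel {A B : TTGraph} : IsTheta l A → IsTheta l B → IsTheta l (A.parallel B)

variable {A : TTGraph} {l : ℕ}

lemma IsTheta.isSP (hA : A.IsTheta l) (hl : l ≠ 0) : IsSP A := by
  induction hA with
  | path => exact path_isSP hl
  | parallel _ _ hA hB => exact .parallel _ _ _ hA hB (Equiv.refl _)

lemma IsTheta.exists_isHeight (hA : A.IsTheta l) : ∃ h, A.IsHeight l h := by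
  induction hA with
  | path => exact ⟨_, path_isHeight l⟩
  | parallel _ _ hA hB =>
    obtain ⟨f, hf⟩ := hA
    obtain ⟨g, hg⟩ := hB
    exact ⟨_, hf.parallel hg⟩

lemma IsTheta.x_ne_y (hA : A.IsTheta l) (hl : l ≠ 0) : A.x ≠ A.y :=
  hA.exists_isHeight.elim fun _ hh => hh.x_ne_y hl

lemma IsTheta.two_mul_le_egirth (hA : A.IsTheta l) : ((2 * l : ℕ) : ℕ∞) ≤ A.G.egirth :=
  hA.exists_isHeight.elim fun _ hh => hh.two_mul_le_egirth

end Theta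

section Forbids

variable {α : Type*} {A B : TTGraph} {a m : ℕ} {X : Finset α} {P Q : Set (Finset α × Finset α)}

/-- There are lists of size `a` on `A`, equal to `X` at both terminals, such that no `m`-fold
colouring from these lists gives the terminals a pair of colour sets in `Q`. -/
def Forbids (A : TTGraph) (a m : ℕ) (X : Finset α) (Q : Set (Finset α × Finset α)) : Prop :=
  ∃ L : A.V → Finset α, L A.x = X ∧ L A.y = X ∧ (∀ v, (L v).card = a) ∧
    ∀ φ, IsFoldColoring A.G L m φ → (φ A.x, φ A.y) ∉ Q

lemma Forbids.parallel (hA : A.x ≠ A.y) (hB : B.x ≠ B.y) (hP : A.Forbids a m X P)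
    (hQ : B.Forbids a m X Q) : (A.parallel B).Forbids a m X (P ∪ Q) := by
  obtain ⟨L, hLx, hLy, hLcard, hL⟩ := hP
  obtain ⟨M, hMx, hMy, hMcard, hM⟩ := hQ
  refine ⟨parallelGlue L M, hLx, hLy, ?_, fun φ hφ => ?_⟩
  · rintro (v | v)
    · exact hLcard v
    · exact hMcard v
  have hφA := hL _ (hφ.comp_hom (parallelInl A B))
  have glue_comp : parallelGlue L M ∘ parallelInr hA B = M :=
    funext (parallelGlue_pmap (hLx.trans hMx.symm) (hLy.trans hMy.symm))
  have hφB := hM _ (glue_comp ▸ hφ.comp_hom (parallelInr hA B))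
  have hx : parallelInr hA B B.x = (A.parallel B).x := pmap_x
  have hy : parallelInr hA B B.y = (A.parallel B).y := pmap_y hB
  rw [Function.comp_apply, Function.comp_apply, hx, hy] at hφB
  exact fun h => h.elim hφA hφB

lemma path_forbids_singleton {q e : ℕ} (hq : 0 < q) (hqe : q * e < m)
    {C S T : Finset α} (hX : X.card = 2 * m + e) (hC : C.card = m + e) (hXC : Disjoint X C)
    (hS : S ∈ X.powersetCard m) (hT : T ∈ X.powersetCard m) :
    (path (2 * q + 1)).Forbids (2 * m + e) m X {(S, T)} := by
  classical
  rw [Finset.mem_powersetCard] at hS hT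
  refine ⟨fun v => strandList q X C S T v.val, if_pos (Or.inl rfl), if_pos (Or.inr rfl),
    fun v => ?_, fun φ hφ => ?_⟩
  · simp only [strandList]
    split_ifs
    · exact hX
    · rw [Finset.card_union_of_disjoint (hXC.mono_left hT.1).symm]
      omega
    · rw [Finset.card_union_of_disjoint (hXC.mono_left hS.1)]
      omega
  · intro hST
    obtain ⟨hfirst, hlast⟩ := Prod.mk.inj (Set.mem_singleton_iff.1 hST)
    have val_ofNat {j : ℕ} (hj : j ≤ 2 * q + 1) : (Fin.ofNat (2 * q + 2) j).val = j :=
      Nat.mod_eq_of_lt (by omega)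
    refine last_ne_of_subset_strandList (ψ := fun j => φ (Fin.ofNat (2 * q + 2) j)) hq hqe hS.2 hC
      (X := X) (T := T) (fun j _ => hφ.card_eq _) (fun j hj => ?_) (fun j hj => ?_) hfirst ?_
    · refine hφ.disjoint _ _ (pathGraph_adj.2 (Or.inl ?_))
      rw [val_ofNat (by omega), val_ofNat (by omega)]
    · simpa only [val_ofNat (Nat.le_succ_of_le hj)] using hφ.subset (Fin.ofNat (2 * q + 2) j)
    · rw [← hlast]
      exact congrArg φ (Fin.ext (val_ofNat le_rfl))

lemma exists_isTheta_forbids {l : ℕ} (hl : l ≠ 0) {P : Finset (Finset α × Finset α)}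
    (hne : P.Nonempty) (hpath : ∀ p ∈ P, (path l).Forbids a m X {p}) :
    ∃ A : TTGraph, A.IsTheta l ∧ A.Forbids a m X P := by
  induction hne using Finset.Nonempty.cons_induction with
  | singleton p =>
    refine ⟨path l, .path, ?_⟩
    rw [Finset.coe_singleton]
    exact hpath p (Finset.mem_singleton_self p)
  | cons p P hp _ ih =>
    obtain ⟨A, hA, hAP⟩ := ih fun r hr => hpath r (Finset.mem_cons_of_mem hr)
    refine ⟨(path l).parallel A, .parallel .path hA, ?_⟩
    rw [Finset.coe_cons, Set.insert_eq]
    exact (hpath p (Finset.mem_cons_self p P)).parallel (IsTheta.path.x_ne_y hl) (hA.x_ne_y hl) hAP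

lemma Forbids.not_choosable {X : Finset ℕ}
    (hA : A.Forbids a m X ↑(X.powersetCard m ×ˢ X.powersetCard m)) : ¬ Choosable A.G a m := by
  intro hchoosable
  obtain ⟨L, hx, hy, hcard, hL⟩ := hA
  obtain ⟨φ, hsub, hφcard, hdisj⟩ := hchoosable L hcard
  refine hL φ ⟨hsub, hφcard, hdisj⟩ ?_
  rw [Finset.mem_coe, Finset.mem_product, Finset.mem_powersetCard, Finset.mem_powersetCard]
  exact ⟨⟨hx ▸ hsub A.x, hφcard _⟩, hy ▸ hsub A.y, hφcard _⟩

end Forbids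

end TTGraph

lemma exists_isTheta_not_choosable {q m e : ℕ} (hq : 0 < q) (hqe : q * e < m) :
    ∃ A : TTGraph, A.IsTheta (2 * q + 1) ∧ ¬ Choosable A.G (2 * m + e) m := by
  set X := Finset.range (2 * m + e)
  set C := Finset.Ico (2 * m + e) (2 * m + e + (m + e))
  have hX : X.card = 2 * m + e := Finset.card_range _
  have hC : C.card = m + e := by simp [C]
  have hXC : Disjoint X C := by
    simp only [X, C, Finset.range_eq_Ico]
    exact Finset.Ico_disjoint_Ico_consecutive _ _ _
  have hne : (X.powersetCard m).Nonempty := Finset.powersetCard_nonempty.2 (by omega)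
  obtain ⟨A, hA, hforbids⟩ := TTGraph.exists_isTheta_forbids (2 * q).succ_ne_zero
    (hne.product hne) fun p hp => TTGraph.path_forbids_singleton hq hqe hX hC hXC
      (Finset.mem_product.1 hp).1 (Finset.mem_product.1 hp).2
  exact ⟨A, hA, hforbids.not_choosable⟩

/-- Theorem 3: for `0 < ε < 1/q` with `εm` an integer and
`k ∈ {4q-1, 4q, 4q+1, 4q+2}`, there is a series-parallel graph of girth at
least `k` that is not `((2+ε)m, m)`-choosable. -/
theorem stmt_7 (q m em : ℕ) (hq : 0 < q) (hm : 0 < m) (ε : ℝ) (hε : 0 < ε)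
    (hem : (em : ℝ) = ε * m) (hεq : ε < 1 / q) (k : ℕ)
    (hk : k ∈ ({4 * q - 1, 4 * q, 4 * q + 1, 4 * q + 2} : Set ℕ)) :
    ∃ A : TTGraph, IsSP A ∧ (k : ℕ∞) ≤ A.G.egirth ∧
      ¬ Choosable A.G (2 * m + em) m := by
  have hqe : q * em < m := by
    have hε_mul : ε * q < 1 := (lt_div_iff₀ (Nat.cast_pos.2 hq)).1 hεq
    have : (q : ℝ) * em < m := by
      calc (q : ℝ) * em = ε * q * m := by rw [hem]; ring
        _ < m := mul_lt_of_lt_one_left (Nat.cast_pos.2 hm) hε_mul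
    exact_mod_cast this
  have hk' : k ≤ 2 * (2 * q + 1) := by
    simp only [Set.mem_insert_iff, Set.mem_singleton_iff] at hk
    omega
  obtain ⟨A, hA, hchoosable⟩ := exists_isTheta_not_choosable hq hqe
  exact ⟨A, hA.isSP (2 * q).succ_ne_zero,
    (Nat.cast_le.2 hk').trans hA.two_mul_le_egirth, hchoosable⟩
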